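/- arXiv:1206.4667 — 2 statements merged into one kernel-verified Lean document; each statement's English description precedes it below -/
import Mathlib

section
/- For any real numbers π, a, b with 0 < π < 1 and 0 ≤ a < b ≤ 1, the area of the unachievable region over recalls restricted to [a, b] equals b − a + ((1 − π)/π) · ln( (π·(a − 1) + 1) / (π·(b − 1) + 1) ); that is, ∫_a^b π·r / (1 − π + π·r) dr = b − a + ((1 − π)/π) · ln( (π·(a − 1) + 1) / (π·(b − 1) + 1) ). -/
open Set intervalIntegral Interval

theorem integral_sub_const_div_self {a b : ℝ} (c : ℝ) (h : (0 : ℝ) ∉ [[a, b]]) :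
    ∫ x in a..b, (x - c) / x = b - a - c * Real.log (b / a) := by
  have hne (x : ℝ) (hx : x ∈ [[a, b]]) : x ≠ 0 := ne_of_mem_of_not_mem hx h
  have hinv : IntervalIntegrable (fun x : ℝ ↦ x⁻¹) MeasureTheory.volume a b :=
    intervalIntegrable_inv hne continuousOn_id
  calc
    ∫ x in a..b, (x - c) / x = ∫ x in a..b, (1 - c * x⁻¹) :=
      integral_congr fun x hx ↦ by
        have := hne x hx
        field_simp
    _ = b - a - c * Real.log (b / a) := by
      rw [integral_sub intervalIntegrable_const (hinv.const_mul c), integral_one,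
        integral_const_mul, integral_inv h]

theorem integral_mul_div_add_mul {a b c d : ℝ} (hc : c ≠ 0)
    (h : (0 : ℝ) ∉ [[d + c * a, d + c * b]]) :
    ∫ x in a..b, c * x / (d + c * x)
      = b - a + d / c * Real.log ((d + c * a) / (d + c * b)) := by
  calc
    ∫ x in a..b, c * x / (d + c * x) = ∫ x in a..b, (d + c * x - d) / (d + c * x) := by
      simp only [add_sub_cancel_left]
    _ = c⁻¹ * ∫ y in (d + c * a)..(d + c * b), (y - d) / y :=
      integral_comp_add_mul (fun y ↦ (y - d) / y) hc d
    _ = b - a + d / c * Real.log ((d + c * a) / (d + c * b)) := by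
      rw [integral_sub_const_div_self d h, ← inv_div (d + c * a), Real.log_inv]
      field_simp
      ring

theorem aucpr_min_restricted_eq_general {π a b : ℝ} (hπ : π ≠ 0)
    (h : (0 : ℝ) ∉ [[1 - π + π * a, 1 - π + π * b]]) :
    ∫ r in a..b, π * r / (1 - π + π * r)
      = b - a + ((1 - π) / π) * Real.log ((π * (a - 1) + 1) / (π * (b - 1) + 1)) := by
  have denom_eq (r : ℝ) : π * (r - 1) + 1 = 1 - π + π * r := by ring
  rw [denom_eq, denom_eq, integral_mul_div_add_mul hπ h]

/-- Minimum AUCPR over recalls restricted to [a, b]: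
∫_a^b π·r/(1−π+π·r) dr = b − a + ((1−π)/π)·ln((π(a−1)+1)/(π(b−1)+1)). -/
theorem aucpr_min_restricted_eq
    (π a b : ℝ) (h0 : 0 < π) (h1 : π < 1)
    (ha : 0 ≤ a) (hab : a < b) (hb : b ≤ 1) :
    ∫ r in a..b, π * r / (1 - π + π * r)
      = b - a + ((1 - π) / π) * Real.log ((π * (a - 1) + 1) / (π * (b - 1) + 1)) := by
  have denom_pos {r : ℝ} (hr : 0 ≤ r) : 0 < 1 - π + π * r :=
    add_pos_of_pos_of_nonneg (sub_pos.2 h1) (mul_nonneg h0.le hr)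
  exact aucpr_min_restricted_eq_general h0.ne'
    (notMem_uIcc_of_lt (denom_pos ha) (denom_pos (ha.trans hab.le)))
end

section
/- Fix a real number π with 0 < π < 1. There is no function f' : [0,1] × [0,1] → ℝ satisfying all three of the following: (1) f'(r, π·r / (1 − π + π·r)) = 0 for all r ∈ [0,1]; (2) for every fixed p ∈ [0,1], f'(r₁, p) < f'(r₂, p) if and only if r₁ < r₂; (3) for every fixed r ∈ [0,1], f'(r, p₁) < f'(r, p₂) if and only if p₁ < p₂. -/
/-!
A function that is strictly increasing in each variable is strictly increasing for the product
order. The minimum precision curve joins `(0, 0)` to the strictly larger point `(1, π)`, so such a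
function cannot vanish at both ends of the curve.
-/

theorem strictMonoOn_uncurry_of_forall_strictMonoOn {α β γ : Type*}
    [PartialOrder α] [PartialOrder β] [Preorder γ] {f : α → β → γ} {s : Set α} {t : Set β}
    (hleft : ∀ b ∈ t, StrictMonoOn (fun a => f a b) s) (hright : ∀ a ∈ s, StrictMonoOn (f a) t) :
    StrictMonoOn (Function.uncurry f) (s ×ˢ t) := by
  rintro ⟨a₁, b₁⟩ ⟨ha₁, hb₁⟩ ⟨a₂, b₂⟩ ⟨ha₂, hb₂⟩ hlt
  rcases Prod.mk_lt_mk.1 hlt with ⟨ha, hb⟩ | ⟨ha, hb⟩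
  · calc
      f a₁ b₁ < f a₂ b₁ := hleft b₁ hb₁ ha₁ ha₂ ha
      _ ≤ f a₂ b₂ := (hright a₂ ha₂).monotoneOn hb₁ hb₂ hb
  · calc
      f a₁ b₁ ≤ f a₂ b₁ := (hleft b₁ hb₁).monotoneOn ha₁ ha₂ ha
      _ < f a₂ b₂ := hright a₂ ha₂ hb₁ hb₂ hb

/-- The minimum precision curve in PR space, over any field: the least precision attainable at
recall `r` when the skew is `π`. The denominator is nonzero for real `0 < π < 1` and `0 ≤ r`. -/
def minPrecision {K : Type*} [Field K] (π r : K) : K :=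
  π * r / (1 - π + π * r)

section MinPrecision

variable {K : Type*} [Field K] (π : K)

theorem minPrecision_zero_right : minPrecision π 0 = 0 := by
  simp [minPrecision]

theorem minPrecision_one_right : minPrecision π 1 = π := by
  simp [minPrecision]

end MinPrecision

/-- There is no modified F1 score on [0,1] × [0,1] that vanishes on the minimum
precision curve and is strictly increasing in recall and in precision. -/
theorem no_modified_f1
    (π : ℝ) (h0 : 0 < π) (h1 : π < 1) :
    ¬ ∃ f' : ℝ → ℝ → ℝ,
        (∀ r ∈ Set.Icc (0:ℝ) 1, f' r (π * r / (1 - π + π * r)) = 0) ∧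
        (∀ p ∈ Set.Icc (0:ℝ) 1, ∀ r₁ ∈ Set.Icc (0:ℝ) 1, ∀ r₂ ∈ Set.Icc (0:ℝ) 1,
          (f' r₁ p < f' r₂ p ↔ r₁ < r₂)) ∧
        (∀ r ∈ Set.Icc (0:ℝ) 1, ∀ p₁ ∈ Set.Icc (0:ℝ) 1, ∀ p₂ ∈ Set.Icc (0:ℝ) 1,
          (f' r p₁ < f' r p₂ ↔ p₁ < p₂)) := by
  rintro ⟨f, hcurve, hrecall, hprecision⟩
  have zero_mem : (0 : ℝ) ∈ Set.Icc 0 1 := Set.left_mem_Icc.2 zero_le_one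
  have one_mem : (1 : ℝ) ∈ Set.Icc 0 1 := Set.right_mem_Icc.2 zero_le_one
  have hmono : StrictMonoOn (Function.uncurry f) (Set.Icc 0 1 ×ˢ Set.Icc 0 1) :=
    strictMonoOn_uncurry_of_forall_strictMonoOn
      (fun p hp r₁ hr₁ r₂ hr₂ => (hrecall p hp r₁ hr₁ r₂ hr₂).2)
      (fun r hr p₁ hp₁ p₂ hp₂ => (hprecision r hr p₁ hp₁ p₂ hp₂).2)
  have hlt : f 0 0 < f 1 π :=
    hmono ⟨zero_mem, zero_mem⟩ ⟨one_mem, h0.le, h1.le⟩ (Prod.mk_lt_mk_of_lt_of_le one_pos h0.le)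
  have hvanish : ∀ r ∈ Set.Icc (0 : ℝ) 1, f r (minPrecision π r) = 0 := hcurve
  have hstart : f 0 0 = 0 := by
    simpa only [minPrecision_zero_right] using hvanish 0 zero_mem
  have hend : f 1 π = 0 := by
    simpa only [minPrecision_one_right] using hvanish 1 one_mem
  exact hlt.ne (hstart.trans hend.symm)
end
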